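/- Let h be a positive integer and let 𝔅 be the 2h×2h complex matrix given in block form by 𝔅 = [[O_h, (1/2)I_h],[(1/2)I_h, O_h]]. Let g be a 2h×2h complex matrix with block form g = [[g₁₁, g₁₂],[g₂₁, g₂₂]] (h×h blocks) satisfying gᵗ·𝔅·g = 𝔅, and let U be an h×h skew-symmetric complex matrix such that the matrix g₁₁ᵗ + U·g₁₂ᵗ is invertible. Then the matrix (g₁₁ᵗ + U·g₁₂ᵗ)⁻¹·(g₂₁ᵗ + U·g₂₂ᵗ) is skew-symmetric. -/

import Mathlib

open Matrix

/-- The matrix `𝔅 = [[O_h, (1/2)I_h],[(1/2)I_h, O_h]]` of the quadratic form. -/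
noncomputable def Bmat (h : ℕ) : Matrix (Fin h ⊕ Fin h) (Fin h ⊕ Fin h) ℂ :=
  Matrix.fromBlocks 0 ((1 / 2 : ℂ) • 1) ((1 / 2 : ℂ) • 1) 0

/-- If `g = [[g₁₁,g₁₂],[g₂₁,g₂₂]]` is orthogonal for `𝔅` and `U` is skew-symmetric with
`g₁₁ᵗ + U·g₁₂ᵗ` invertible, then `(g₁₁ᵗ + U·g₁₂ᵗ)⁻¹·(g₂₁ᵗ + U·g₂₂ᵗ)` is skew-symmetric. -/
theorem action_skew (h : ℕ) (hh : 0 < h)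
    (g₁₁ g₁₂ g₂₁ g₂₂ U : Matrix (Fin h) (Fin h) ℂ)
    (hg : (Matrix.fromBlocks g₁₁ g₁₂ g₂₁ g₂₂)ᵀ * Bmat h * Matrix.fromBlocks g₁₁ g₁₂ g₂₁ g₂₂
      = Bmat h)
    (hU : Uᵀ = -U) (hinv : IsUnit (g₁₁ᵀ + U * g₁₂ᵀ)) :
    ((g₁₁ᵀ + U * g₁₂ᵀ)⁻¹ * (g₂₁ᵀ + U * g₂₂ᵀ))ᵀ =
      -((g₁₁ᵀ + U * g₁₂ᵀ)⁻¹ * (g₂₁ᵀ + U * g₂₂ᵀ)) := by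
  have h2 : ∀ X Y : Matrix (Fin h) (Fin h) ℂ,
      (1 / 2 : ℂ) • X + (1 / 2 : ℂ) • Y = (1 / 2 : ℂ) • (X + Y) := fun X Y => (smul_add _ _ _).symm
  have h0 : ∀ X Y : Matrix (Fin h) (Fin h) ℂ, (1 / 2 : ℂ) • X = (1 / 2 : ℂ) • Y → X = Y :=
    fun X Y e => smul_right_injective _ (by norm_num : (1 / 2 : ℂ) ≠ 0) e
  rw [Bmat, Matrix.fromBlocks_transpose, Matrix.fromBlocks_multiply,
    Matrix.fromBlocks_multiply, Matrix.fromBlocks_inj] at hg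
  simp only [Matrix.mul_zero, Matrix.mul_smul, Matrix.smul_mul, Matrix.mul_one, zero_add,
    add_zero, h2] at hg
  obtain ⟨e1, e2, e3, e4⟩ := hg
  have e1' := h0 _ 0 (e1.trans (smul_zero _).symm)
  have e4' := h0 _ 0 (e4.trans (smul_zero _).symm)
  have e2' := h0 _ _ e2
  have e3' := h0 _ _ e3
  have key : (g₁₁ᵀ + U * g₁₂ᵀ) * (g₂₁ᵀ + U * g₂₂ᵀ)ᵀ
      + (g₂₁ᵀ + U * g₂₂ᵀ) * (g₁₁ᵀ + U * g₁₂ᵀ)ᵀ = 0 := by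
    simp only [Matrix.transpose_add, Matrix.transpose_mul, Matrix.transpose_transpose, hU]
    have : (g₁₁ᵀ + U * g₁₂ᵀ) * (g₂₁ + g₂₂ * -U) + (g₂₁ᵀ + U * g₂₂ᵀ) * (g₁₁ + g₁₂ * -U)
        = (g₂₁ᵀ * g₁₁ + g₁₁ᵀ * g₂₁) - (g₂₁ᵀ * g₁₂ + g₁₁ᵀ * g₂₂) * U
          + U * (g₂₂ᵀ * g₁₁ + g₁₂ᵀ * g₂₁) - U * (g₂₂ᵀ * g₁₂ + g₁₂ᵀ * g₂₂) * U := by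
      noncomm_ring
    rw [this, e1', e2', e3', e4']
    simp
  generalize g₁₁ᵀ + U * g₁₂ᵀ = A at *
  generalize g₂₁ᵀ + U * g₂₂ᵀ = C at *
  have hd : IsUnit A.det := (Matrix.isUnit_iff_isUnit_det A).mp hinv
  have hdt : IsUnit Aᵀ.det := by rwa [Matrix.det_transpose]
  have k : A * Cᵀ = -(C * Aᵀ) := eq_neg_of_add_eq_zero_left key
  rw [Matrix.transpose_mul, Matrix.transpose_nonsing_inv]
  calc Cᵀ * Aᵀ⁻¹ = A⁻¹ * (A * Cᵀ) * Aᵀ⁻¹ := by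
        rw [Matrix.nonsing_inv_mul_cancel_left _ _ hd]
    _ = -(A⁻¹ * C) := by
        rw [k, Matrix.mul_neg, Matrix.neg_mul, ← Matrix.mul_assoc,
          Matrix.mul_nonsing_inv_cancel_right _ _ hdt]
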